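/- Let Θ be a finite set of states, R a finite set of receivers with |R| = n̄ ≥ 2, each r ∈ R with a finite action set A^r of cardinality at most ϱ, where ϱ ≥ 2, and utility u^r : A^r × Θ → [0,1]. Let 0 < ε ≤ 1, 0 < δ ≤ 1, p* ∈ Δ_Θ, and k = ⌈32·ln(4·n̄·ϱ/δ)/ε²⌉, and let γ̃ be the empirical distribution of k i.i.d. samples drawn from p*. Let f = {f_θ}_{θ∈Θ} with f_θ : Π_{r∈R} A^r → [0,1] be the sender's utility functions, let α ∈ (0,1], and let g be a function assigning to each pair (p, Z), where p ∈ Δ_Θ and Z = (Z^r)_{r∈R} is a tuple of nonempty subsets Z^r ⊆ A^r, an action profile g(p,Z) ∈ Π_r Z^r such that Σ_θ p_θ·f_θ(g(p,Z)) ≥ α · max_{a ∈ Π_r Z^r} Σ_θ p_θ·f_θ(a). Then E[ Σ_{θ∈Θ} γ̃_θ · f_θ( g(γ̃, M_ε(γ̃)) ) ] ≥ α·(1−δ) · max_{a ∈ Π_r M(p*)^r} Σ_{θ∈Θ} p*_θ · f_θ(a), where M(p) is the tuple whose r-th component is the set of actions a ∈ A^r maximizing Σ_θ p_θ·u^r(a,θ),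 and M_ε(p) is the tuple whose r-th component is {a ∈ A^r : Σ_θ p_θ·u^r(a,θ) ≥ Σ_θ p_θ·u^r(a',θ) − ε for all a' ∈ A^r}. -/

import Mathlib

open Finset

/-- The empirical distribution of a vector `s` of `k` samples from `Θ`:
`empDist s θ` is the fraction of samples equal to `θ`. -/
noncomputable def empDist {Θ : Type*} [Fintype Θ] [DecidableEq Θ] {k : ℕ}
    (s : Fin k → Θ) (θ : Θ) : ℝ :=
  ((Finset.univ.filter fun t => s t = θ).card : ℝ) / k

/-!
Draw `k` samples from `p`. For a nonnegative payoff `h`, the empirical mean of `h` is unbiased; the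
point is that restricting its expectation to the sample vectors on which no receiver deviation gains
more than `ε` costs only a *multiplicative* factor, although `p ⬝ᵥ h` may be arbitrarily small. A
union bound on the probability of a deviation loses an additive term, so the deviation event is
weighted by the empirical mean of `h` instead: by linearity it suffices to weight it by `h (s i)`
for a single sample `i`, which is independent of the `k - 1` others, and for these the
Chernoff–Hoeffding argument still works.

When no deviation gains more than `ε`, a best response to `p` is an `ε`-best response to the
empirical posterior, so the tie-breaking rule secures an `α`-fraction of the sender's payoff there.
-/

section FiniteExpectation

variable {Θ : Type*} [Fintype Θ] {p v h : Θ → ℝ} {l : ℝ}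

theorem dotProduct_exp_mul_le (hp : p ∈ stdSimplex ℝ Θ) (hv : ∀ θ, |v θ| ≤ 1)
    (hmean : p ⬝ᵥ v ≤ 0) (hl : 0 ≤ l) :
    (p ⬝ᵥ fun θ => Real.exp (v θ * l)) ≤ Real.exp (l ^ 2 / 2) :=
  calc (p ⬝ᵥ fun θ => Real.exp (v θ * l))
      ≤ p ⬝ᵥ fun θ => Real.cosh l + v θ * Real.sinh l :=
        dotProduct_le_dotProduct_of_nonneg_left
          (fun θ => Real.exp_mul_le_cosh_add_mul_sinh (hv θ) l) hp.1
    _ = Real.cosh l + p ⬝ᵥ v * Real.sinh l := by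
        simp only [dotProduct, mul_add, sum_add_distrib, ← mul_assoc, ← sum_mul, hp.2, one_mul]
    _ ≤ Real.cosh l :=
        add_le_of_nonpos_right (mul_nonpos_of_nonpos_of_nonneg hmean (Real.sinh_nonneg_iff.2 hl))
    _ ≤ Real.exp (l ^ 2 / 2) := Real.cosh_le_exp_half_sq l

theorem dotProduct_mul_exp_le (hp : 0 ≤ p) (hv : ∀ θ, |v θ| ≤ 1) (hh : 0 ≤ h) (hl : 0 ≤ l) :
    (p ⬝ᵥ fun θ => h θ * Real.exp (v θ * l)) ≤ Real.exp l * p ⬝ᵥ h := by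
  rw [← smul_eq_mul, ← dotProduct_smul]
  refine dotProduct_le_dotProduct_of_nonneg_left (fun θ => ?_) hp
  have hexp : Real.exp (v θ * l) ≤ Real.exp l :=
    Real.exp_le_exp.2 (mul_le_of_le_one_left hl (abs_le.1 (hv θ)).2)
  exact (mul_le_mul_of_nonneg_left hexp (hh θ)).trans_eq (mul_comm _ _)

end FiniteExpectation

/-- The law of a family of i.i.d. samples from `p`, indexed by `ι`. Expectations under it are
written as dot products `iidDist p ⬝ᵥ F`. -/
def iidDist {Θ ι : Type*} [Fintype ι] (p : Θ → ℝ) (s : ι → Θ) : ℝ :=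
  ∏ i, p (s i)

section IID

variable {Θ ι : Type*} [Fintype ι] {p : Θ → ℝ}

theorem iidDist_nonneg (hp : 0 ≤ p) : 0 ≤ iidDist (ι := ι) p :=
  fun _ => prod_nonneg fun _ _ => hp _

variable [Fintype Θ] [DecidableEq ι]

theorem iidDist_dotProduct_prod (p : Θ → ℝ) (F : ι → Θ → ℝ) :
    (iidDist p ⬝ᵥ fun s => ∏ i, F i (s i)) = ∏ i, p ⬝ᵥ F i := by
  simp only [dotProduct, iidDist, ← prod_mul_distrib]
  exact (Fintype.prod_sum fun i θ => p θ * F i θ).symm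

theorem iidDist_dotProduct_apply_mul_prod (p h w : Θ → ℝ) (i : ι) :
    (iidDist p ⬝ᵥ fun s => h (s i) * ∏ j, w (s j)) =
      (p ⬝ᵥ fun θ => h θ * w θ) * (p ⬝ᵥ w) ^ (Fintype.card ι - 1) := by
  let F : ι → Θ → ℝ := fun j θ => (if j = i then h θ else 1) * w θ
  have hF (s : ι → Θ) : h (s i) * ∏ j, w (s j) = ∏ j, F j (s j) := by
    simp only [F, prod_mul_distrib, prod_ite_eq', mem_univ, if_true]
  have hne (j : ι) (hj : j ∈ univ.erase i) : p ⬝ᵥ F j = p ⬝ᵥ w := by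
    simp only [F, if_neg (ne_of_mem_erase hj), one_mul]
  simp only [hF]
  rw [iidDist_dotProduct_prod, ← mul_prod_erase univ _ (mem_univ i), prod_congr rfl hne, prod_const,
    card_erase_of_mem (mem_univ i), card_univ]
  simp only [F, if_true]

theorem iidDist_dotProduct_apply (hp : p ∈ stdSimplex ℝ Θ) (h : Θ → ℝ) (i : ι) :
    (iidDist p ⬝ᵥ fun s => h (s i)) = p ⬝ᵥ h := by
  have hp1 : (p ⬝ᵥ fun _ => 1) = 1 := (dotProduct_one p).trans hp.2
  simpa only [prod_const_one, mul_one, hp1, one_pow] using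
    iidDist_dotProduct_apply_mul_prod p h (fun _ => 1) i

theorem iidDist_dotProduct_apply_mul_prod_exp_le {v h : Θ → ℝ} {l : ℝ} (hp : p ∈ stdSimplex ℝ Θ)
    (hv : ∀ θ, |v θ| ≤ 1) (hmean : p ⬝ᵥ v ≤ 0) (hh : 0 ≤ h) (hl : 0 ≤ l) (i : ι) :
    (iidDist p ⬝ᵥ fun s => h (s i) * ∏ j, Real.exp (v (s j) * l)) ≤
      Real.exp (l + (Fintype.card ι - 1) * (l ^ 2 / 2)) * p ⬝ᵥ h := by
  have hmgf_nonneg : 0 ≤ p ⬝ᵥ fun θ => Real.exp (v θ * l) :=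
    dotProduct_nonneg_of_nonneg hp.1 fun _ => (Real.exp_pos _).le
  have hcard : 1 ≤ Fintype.card ι := Fintype.card_pos_iff.2 ⟨i⟩
  calc (iidDist p ⬝ᵥ fun s => h (s i) * ∏ j, Real.exp (v (s j) * l))
      = (p ⬝ᵥ fun θ => h θ * Real.exp (v θ * l)) *
          (p ⬝ᵥ fun θ => Real.exp (v θ * l)) ^ (Fintype.card ι - 1) :=
        iidDist_dotProduct_apply_mul_prod p h (fun θ => Real.exp (v θ * l)) i
    _ ≤ (Real.exp l * p ⬝ᵥ h) * Real.exp (l ^ 2 / 2) ^ (Fintype.card ι - 1) :=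
        mul_le_mul (dotProduct_mul_exp_le hp.1 hv hh hl)
          (pow_le_pow_left₀ hmgf_nonneg (dotProduct_exp_mul_le hp hv hmean hl) _)
          (pow_nonneg hmgf_nonneg _)
          (mul_nonneg (Real.exp_pos _).le (dotProduct_nonneg_of_nonneg hp.1 hh))
    _ = Real.exp (l + (Fintype.card ι - 1) * (l ^ 2 / 2)) * p ⬝ᵥ h := by
        rw [← Real.exp_nat_mul, Nat.cast_sub hcard, Nat.cast_one, Real.exp_add]
        ring

end IID

section EmpiricalDistribution

variable {Θ : Type*} [Fintype Θ] [DecidableEq Θ] {k : ℕ}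

theorem empDist_nonneg (s : Fin k → Θ) : 0 ≤ empDist s :=
  fun _ => div_nonneg (Nat.cast_nonneg _) (Nat.cast_nonneg _)

theorem empDist_dotProduct (s : Fin k → Θ) (h : Θ → ℝ) :
    empDist s ⬝ᵥ h = (∑ t, h (s t)) / k := by
  rw [← sum_fiberwise univ s, sum_div]
  refine sum_congr rfl fun θ _ => ?_
  rw [sum_congr rfl fun t ht => congrArg h (mem_filter.1 ht).2, sum_const, nsmul_eq_mul, empDist]
  ring

theorem empDist_mem_stdSimplex (hk : 0 < k) (s : Fin k → Θ) : empDist s ∈ stdSimplex ℝ Θ := by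
  refine ⟨empDist_nonneg s, ?_⟩
  rw [← dotProduct_one, empDist_dotProduct]
  simp [hk.ne']

theorem iidDist_dotProduct_empDist_mul (p h : Θ → ℝ) (F : (Fin k → Θ) → ℝ) :
    (iidDist p ⬝ᵥ fun s => empDist s ⬝ᵥ h * F s) =
      (∑ t, iidDist p ⬝ᵥ fun s => h (s t) * F s) / k := by
  have hsum : (fun s => empDist s ⬝ᵥ h * F s) = (k : ℝ)⁻¹ • ∑ t, fun s => h (s t) * F s := by
    ext s
    rw [empDist_dotProduct, Pi.smul_apply, Finset.sum_apply, ← sum_mul, smul_eq_mul]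
    ring
  rw [hsum, dotProduct_smul, dotProduct_sum, smul_eq_mul, inv_mul_eq_div]

theorem iidDist_dotProduct_empDist {p : Θ → ℝ} (hk : 0 < k) (hp : p ∈ stdSimplex ℝ Θ)
    (h : Θ → ℝ) : (iidDist p ⬝ᵥ fun s : Fin k → Θ => empDist s ⬝ᵥ h) = p ⬝ᵥ h := by
  have hk' : (k : ℝ) ≠ 0 := Nat.cast_ne_zero.2 hk.ne'
  have hmean := iidDist_dotProduct_empDist_mul (k := k) p h fun _ => 1
  simp only [mul_one, iidDist_dotProduct_apply hp, sum_const, card_univ, Fintype.card_fin,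
    nsmul_eq_mul] at hmean
  rw [hmean, mul_div_cancel_left₀ _ hk']

end EmpiricalDistribution

section Deviation

theorem le_indicator_forall_add_sum_indicator_not {α ι M : Type*} [Fintype ι]
    [AddCommMonoid M] [PartialOrder M] [IsOrderedAddMonoid M] (P : ι → α → Prop)
    {X : α → M} (hX : 0 ≤ X) :
    X ≤ {a | ∀ j, P j a}.indicator X + ∑ j, {a | ¬P j a}.indicator X := by
  intro a
  have hnonneg (S : Set α) : 0 ≤ S.indicator X a := Set.indicator_nonneg (fun a _ => hX a) a
  rw [Pi.add_apply, Finset.sum_apply]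
  by_cases ha : ∀ j, P j a
  · rw [Set.indicator_of_mem (s := {a | ∀ j, P j a}) ha]
    exact le_add_of_nonneg_right (sum_nonneg fun j _ => hnonneg _)
  · obtain ⟨j, hj⟩ := not_forall.1 ha
    calc X a = {a | ¬P j a}.indicator X a := (Set.indicator_of_mem (s := {a | ¬P j a}) hj X).symm
      _ ≤ ∑ j, {a | ¬P j a}.indicator X a :=
        single_le_sum (f := fun j => {a | ¬P j a}.indicator X a) (fun j _ => hnonneg _) (mem_univ j)
      _ ≤ _ := le_add_of_nonneg_left (hnonneg _)

variable {Θ : Type*} [Fintype Θ] [DecidableEq Θ] {k : ℕ} {p h : Θ → ℝ} {ε : ℝ}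

theorem one_le_exp_mul_prod_exp_of_lt_empDist_dotProduct {v : Θ → ℝ} (hk : 0 < k) (hε : 0 ≤ ε)
    {s : Fin k → Θ} (hs : ε < empDist s ⬝ᵥ v) :
    1 ≤ Real.exp (-(k * ε ^ 2)) * ∏ t, Real.exp (v (s t) * ε) := by
  rw [empDist_dotProduct, lt_div_iff₀ (Nat.cast_pos.2 hk)] at hs
  rw [← Real.exp_sum, ← Real.exp_add, ← sum_mul]
  exact Real.one_le_exp (by nlinarith)

theorem iidDist_dotProduct_indicator_lt_empDist_le {v : Θ → ℝ} (hk : 0 < k)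
    (hp : p ∈ stdSimplex ℝ Θ) (hv : ∀ θ, |v θ| ≤ 1) (hmean : p ⬝ᵥ v ≤ 0) (hh : 0 ≤ h)
    (hε : 0 ≤ ε) :
    (iidDist p ⬝ᵥ {s : Fin k → Θ | ε < empDist s ⬝ᵥ v}.indicator fun s => empDist s ⬝ᵥ h) ≤
      Real.exp ((1 - k * ε ^ 2) / 2) * p ⬝ᵥ h := by
  have hk' : (k : ℝ) ≠ 0 := Nat.cast_ne_zero.2 hk.ne'
  have hemp (s : Fin k → Θ) : 0 ≤ empDist s ⬝ᵥ h :=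
    dotProduct_nonneg_of_nonneg (empDist_nonneg s) hh
  let W (s : Fin k → Θ) : ℝ := ∏ t, Real.exp (v (s t) * ε)
  have hmarkov (s : Fin k → Θ) :
      {s : Fin k → Θ | ε < empDist s ⬝ᵥ v}.indicator (fun s => empDist s ⬝ᵥ h) s ≤
        Real.exp (-(k * ε ^ 2)) * (empDist s ⬝ᵥ h * W s) := by
    rw [mul_left_comm]
    exact Set.indicator_apply_le'
      (fun hs => le_mul_of_one_le_right (hemp s)
        (one_le_exp_mul_prod_exp_of_lt_empDist_dotProduct hk hε hs))
      (fun _ => mul_nonneg (hemp s) (by positivity))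
  have hexponent :
      -(k * ε ^ 2) + (ε + ((k : ℝ) - 1) * (ε ^ 2 / 2)) ≤ (1 - k * ε ^ 2) / 2 := by
    nlinarith [sq_nonneg (ε - 1)]
  calc (iidDist p ⬝ᵥ {s : Fin k → Θ | ε < empDist s ⬝ᵥ v}.indicator fun s => empDist s ⬝ᵥ h)
      ≤ iidDist p ⬝ᵥ Real.exp (-(k * ε ^ 2)) • fun s => empDist s ⬝ᵥ h * W s :=
        dotProduct_le_dotProduct_of_nonneg_left hmarkov (iidDist_nonneg hp.1)
    _ = Real.exp (-(k * ε ^ 2)) * ((∑ t, iidDist p ⬝ᵥ fun s => h (s t) * W s) / k) := by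
        rw [dotProduct_smul, iidDist_dotProduct_empDist_mul, smul_eq_mul]
    _ ≤ Real.exp (-(k * ε ^ 2)) *
          ((∑ _t : Fin k, Real.exp (ε + (k - 1) * (ε ^ 2 / 2)) * p ⬝ᵥ h) / k) := by
        gcongr with t
        simpa only [Fintype.card_fin] using
          iidDist_dotProduct_apply_mul_prod_exp_le hp hv hmean hh hε t
    _ = Real.exp (-(k * ε ^ 2) + (ε + (k - 1) * (ε ^ 2 / 2))) * p ⬝ᵥ h := by
        rw [sum_const, card_univ, Fintype.card_fin, nsmul_eq_mul, mul_div_cancel_left₀ _ hk',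
          ← mul_assoc, ← Real.exp_add]
    _ ≤ Real.exp ((1 - k * ε ^ 2) / 2) * p ⬝ᵥ h :=
        mul_le_mul_of_nonneg_right (Real.exp_le_exp.2 hexponent)
          (dotProduct_nonneg_of_nonneg hp.1 hh)

theorem le_iidDist_dotProduct_indicator_forall_empDist_le {ι : Type*} [Fintype ι]
    {v : ι → Θ → ℝ} (hk : 0 < k) (hp : p ∈ stdSimplex ℝ Θ) (hv : ∀ j θ, |v j θ| ≤ 1)
    (hmean : ∀ j, p ⬝ᵥ v j ≤ 0) (hh : 0 ≤ h) (hε : 0 ≤ ε) :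
    (1 - Fintype.card ι * Real.exp ((1 - k * ε ^ 2) / 2)) * p ⬝ᵥ h ≤
      iidDist p ⬝ᵥ
        {s : Fin k → Θ | ∀ j, empDist s ⬝ᵥ v j ≤ ε}.indicator fun s => empDist s ⬝ᵥ h := by
  let X (s : Fin k → Θ) : ℝ := empDist s ⬝ᵥ h
  have hX : 0 ≤ X := fun s => dotProduct_nonneg_of_nonneg (empDist_nonneg s) hh
  have hunion := dotProduct_le_dotProduct_of_nonneg_left
    (le_indicator_forall_add_sum_indicator_not (fun j s => empDist s ⬝ᵥ v j ≤ ε) hX)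
    (iidDist_nonneg hp.1)
  rw [dotProduct_add, dotProduct_sum, iidDist_dotProduct_empDist hk hp] at hunion
  have hdeviation : ∑ j, iidDist p ⬝ᵥ {s | ¬empDist s ⬝ᵥ v j ≤ ε}.indicator X ≤
      Fintype.card ι * (Real.exp ((1 - k * ε ^ 2) / 2) * p ⬝ᵥ h) := by
    rw [← nsmul_eq_mul, ← card_univ]
    simp only [not_le]
    exact sum_le_card_nsmul _ _ _ fun j _ =>
      iidDist_dotProduct_indicator_lt_empDist_le hk hp (hv j) (hmean j) hh hε
  linarith

end Deviation

section SampleSize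

theorem card_sigma_le_card_mul {R : Type*} [Fintype R] {A : R → Type*} [∀ r, Fintype (A r)]
    {ϱ : ℕ} (hϱ : ∀ r, Fintype.card (A r) ≤ ϱ) :
    Fintype.card (Σ r, A r) ≤ Fintype.card R * ϱ := by
  rw [Fintype.card_sigma, ← smul_eq_mul]
  exact sum_le_card_nsmul _ _ _ fun r _ => hϱ r

theorem ceil_log_div_sq_pos {M ε δ : ℝ} (hε : 0 < ε) (hδ : 0 < δ) (hM : δ < M) :
    0 < ⌈32 * Real.log (M / δ) / ε ^ 2⌉₊ := by
  have hlog : 0 < Real.log (M / δ) := Real.log_pos ((one_lt_div hδ).2 hM)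
  exact Nat.ceil_pos.2 (by positivity)

theorem mul_exp_ceil_log_div_sq_le {N M ε δ : ℝ} (hε : 0 < ε) (hδ : 0 < δ) (hM : δ ≤ M)
    (hN : 4 * N ≤ M) :
    N * Real.exp ((1 - ⌈32 * Real.log (M / δ) / ε ^ 2⌉₊ * ε ^ 2) / 2) ≤ δ := by
  have hlog : 0 ≤ Real.log (M / δ) := Real.log_nonneg ((one_le_div hδ).2 hM)
  have hM0 : 0 < M := hδ.trans_le hM
  have hk := (div_le_iff₀ (by positivity : 0 < ε ^ 2)).1
    (Nat.le_ceil (32 * Real.log (M / δ) / ε ^ 2))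
  calc N * Real.exp ((1 - ⌈32 * Real.log (M / δ) / ε ^ 2⌉₊ * ε ^ 2) / 2)
      ≤ M / 4 * Real.exp (1 - Real.log (M / δ)) := by
        gcongr <;> linarith
    _ = Real.exp 1 / 4 * δ := by
        rw [Real.exp_sub, Real.exp_log (by positivity)]
        field_simp
    _ ≤ δ := mul_le_of_le_one_left hδ.le (by linarith [Real.exp_one_lt_d9])

end SampleSize

section Persuasion

variable {Θ R : Type*} [Fintype Θ] {A : R → Type*}

/-- The tuple `M_ε(p)` of sets of `ε`-best responses of the receivers to the posterior `p`. -/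
noncomputable def epsBestResponses [∀ r, Fintype (A r)] (u : (r : R) → A r → Θ → ℝ) (ε : ℝ)
    (p : Θ → ℝ) (r : R) : Finset (A r) :=
  univ.filter fun a => ∀ a', p ⬝ᵥ u r a' - ε ≤ p ⬝ᵥ u r a

/-- `g` is an `α`-approximate tie-breaking rule for the sender's utilities `f`: from each product
of nonempty action sets it selects a profile that is optimal up to the factor `α`. -/
def IsApproxTieBreaking (α : ℝ) (f : Θ → ((r : R) → A r) → ℝ)
    (g : (Θ → ℝ) → ((r : R) → Finset (A r)) → (r : R) → A r) : Prop :=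
  ∀ p Z, p ∈ stdSimplex ℝ Θ → (∀ r, (Z r).Nonempty) →
    (∀ r, g p Z r ∈ Z r) ∧
    ∀ a : (r : R) → A r, (∀ r, a r ∈ Z r) → α * p ⬝ᵥ (f · a) ≤ p ⬝ᵥ (f · (g p Z))

variable {u : (r : R) → A r → Θ → ℝ} {ε α : ℝ} {f : Θ → ((r : R) → A r) → ℝ}
  {g : (Θ → ℝ) → ((r : R) → Finset (A r)) → (r : R) → A r}

theorem IsApproxTieBreaking.mul_dotProduct_le {p : Θ → ℝ} {Z : (r : R) → Finset (A r)}
    {a : (r : R) → A r} (hg : IsApproxTieBreaking α f g) (hp : p ∈ stdSimplex ℝ Θ)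
    (ha : ∀ r, a r ∈ Z r) : α * p ⬝ᵥ (f · a) ≤ p ⬝ᵥ (f · (g p Z)) :=
  (hg p Z hp fun r => ⟨a r, ha r⟩).2 a ha

theorem mem_epsBestResponses_iff_sub_le [∀ r, Fintype (A r)] {p : Θ → ℝ} {r : R} {a : A r} :
    a ∈ epsBestResponses u ε p r ↔ ∀ a', p ⬝ᵥ (u r a' - u r a) ≤ ε := by
  simp only [epsBestResponses, mem_filter_univ, dotProduct_sub, sub_le_comm]

theorem qptas_core_general [DecidableEq Θ] [Fintype R] [∀ r, Fintype (A r)]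
    (hu : ∀ r a θ, u r a θ ∈ Set.Icc (0 : ℝ) 1) (hε : 0 ≤ ε)
    {k : ℕ} (hk : 0 < k) {δ : ℝ}
    (hδ : Fintype.card (Σ r, A r) * Real.exp ((1 - k * ε ^ 2) / 2) ≤ δ)
    {p : Θ → ℝ} (hp : p ∈ stdSimplex ℝ Θ) (hf : ∀ θ a, 0 ≤ f θ a) (hα : 0 ≤ α)
    (hg : IsApproxTieBreaking α f g) {astar : (r : R) → A r}
    (hastar : ∀ r a', p ⬝ᵥ u r a' ≤ p ⬝ᵥ u r (astar r)) :
    α * (1 - δ) * p ⬝ᵥ (f · astar) ≤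
      iidDist p ⬝ᵥ fun s : Fin k → Θ =>
        empDist s ⬝ᵥ (f · (g (empDist s) (epsBestResponses u ε (empDist s)))) := by
  let v (x : Σ r, A r) : Θ → ℝ := u x.1 x.2 - u x.1 (astar x.1)
  let X (s : Fin k → Θ) : ℝ := empDist s ⬝ᵥ (f · astar)
  have hv (x : Σ r, A r) (θ : Θ) : |v x θ| ≤ 1 :=
    Real.dist_le_of_mem_Icc_01 (hu _ _ θ) (hu _ _ θ)
  have hmean (x : Σ r, A r) : p ⬝ᵥ v x ≤ 0 := by
    rw [dotProduct_sub]
    exact sub_nonpos.2 (hastar x.1 x.2)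
  have hgood (s : Fin k → Θ) : α * {s | ∀ x, empDist s ⬝ᵥ v x ≤ ε}.indicator X s ≤
      empDist s ⬝ᵥ (f · (g (empDist s) (epsBestResponses u ε (empDist s)))) := by
    by_cases hs : ∀ x, empDist s ⬝ᵥ v x ≤ ε
    · rw [Set.indicator_of_mem (s := {s | ∀ x, empDist s ⬝ᵥ v x ≤ ε}) hs]
      exact hg.mul_dotProduct_le (empDist_mem_stdSimplex hk s) fun r =>
        mem_epsBestResponses_iff_sub_le.2 fun a' => hs ⟨r, a'⟩
    · rw [Set.indicator_of_notMem (s := {s | ∀ x, empDist s ⬝ᵥ v x ≤ ε}) hs, mul_zero]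
      exact dotProduct_nonneg_of_nonneg (empDist_nonneg s) fun θ => hf θ _
  calc α * (1 - δ) * p ⬝ᵥ (f · astar)
      ≤ α * ((1 - Fintype.card (Σ r, A r) * Real.exp ((1 - k * ε ^ 2) / 2)) *
          p ⬝ᵥ (f · astar)) := by
        rw [mul_assoc]
        have hV : 0 ≤ p ⬝ᵥ (f · astar) := dotProduct_nonneg_of_nonneg hp.1 fun θ => hf θ _
        gcongr
    _ ≤ α * (iidDist p ⬝ᵥ {s : Fin k → Θ | ∀ x, empDist s ⬝ᵥ v x ≤ ε}.indicator X) :=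
        mul_le_mul_of_nonneg_left (le_iidDist_dotProduct_indicator_forall_empDist_le hk hp hv hmean
          (fun θ => hf θ astar) hε) hα
    _ = iidDist p ⬝ᵥ α • {s : Fin k → Θ | ∀ x, empDist s ⬝ᵥ v x ≤ ε}.indicator X := by
        rw [dotProduct_smul, smul_eq_mul]
    _ ≤ _ := dotProduct_le_dotProduct_of_nonneg_left hgood (iidDist_nonneg hp.1)

end Persuasion

/-- concluding lemma in the proof of Theorem 15, `th:qptas`.
Let `γ̃` be the empirical distribution of `k` i.i.d. samples from `pstar`, with
`k = ⌈32·ln(4 n̄ ϱ/δ)/ε²⌉`.  Let `g` be an `α`-approximate tie-breaking function: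
for every posterior `p` and every tuple `Z` of nonempty action subsets, `g p Z` selects
an action profile in `Π_r Z^r` whose expected sender utility is at least `α` times that
of any profile in `Π_r Z^r`.  Then, letting the receivers `ε`-best respond to `γ̃` and
the sender use `g`, the expected sender utility is at least `α·(1−δ)` times the sender's
optimal expected utility at `pstar` over best responses to `pstar` (expressed as: at
least `α·(1−δ)·∑_θ pstar θ · f θ a⋆` for every profile `a⋆` of best responses to
`pstar`).  The expectation is the sum over sample vectors `s : Fin k → Θ` of the
product weights `∏ t, pstar (s t)`; `M_ε(empDist s)` is the tuple of finsets of
`ε`-best responses to the empirical posterior. -/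
theorem qptas_core
    {Θ R : Type*} [Fintype Θ] [DecidableEq Θ] [Nonempty Θ] [Fintype R]
    (A : R → Type*) [∀ r, Fintype (A r)] [∀ r, DecidableEq (A r)] [∀ r, Nonempty (A r)]
    (nbar ϱ : ℕ) (hcard : Fintype.card R = nbar) (hn2 : 2 ≤ nbar)
    (hϱ : ∀ r, Fintype.card (A r) ≤ ϱ) (hϱ2 : 2 ≤ ϱ)
    (u : (r : R) → A r → Θ → ℝ)
    (hu : ∀ r (a : A r) (θ : Θ), u r a θ ∈ Set.Icc (0 : ℝ) 1)
    (ε δ : ℝ) (hε0 : 0 < ε) (hε1 : ε ≤ 1) (hδ0 : 0 < δ) (hδ1 : δ ≤ 1)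
    (k : ℕ) (hk : k = ⌈32 * Real.log (4 * nbar * ϱ / δ) / ε ^ 2⌉₊)
    (pstar : Θ → ℝ) (hp0 : ∀ θ, 0 ≤ pstar θ) (hp1 : ∑ θ, pstar θ = 1)
    (f : Θ → ((r : R) → A r) → ℝ)
    (hf : ∀ θ (a : (r : R) → A r), f θ a ∈ Set.Icc (0 : ℝ) 1)
    (α : ℝ) (hα : α ∈ Set.Ioc (0 : ℝ) 1)
    (g : (Θ → ℝ) → ((r : R) → Finset (A r)) → ((r : R) → A r))
    (hg : ∀ (p : Θ → ℝ) (Z : (r : R) → Finset (A r)),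
      ((∀ θ, 0 ≤ p θ) ∧ ∑ θ, p θ = 1) → (∀ r, (Z r).Nonempty) →
      (∀ r, g p Z r ∈ Z r) ∧
      ∀ a : (r : R) → A r, (∀ r, a r ∈ Z r) →
        α * ∑ θ, p θ * f θ a ≤ ∑ θ, p θ * f θ (g p Z)) :
    ∀ astar : (r : R) → A r,
      (∀ r (a' : A r), ∑ θ, pstar θ * u r a' θ ≤ ∑ θ, pstar θ * u r (astar r) θ) →
      α * (1 - δ) * ∑ θ, pstar θ * f θ astar ≤
        ∑ s : Fin k → Θ, (∏ t, pstar (s t)) *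
          ∑ θ, empDist s θ *
            f θ (g (empDist s) fun r =>
              Finset.univ.filter fun a : A r =>
                ∀ a' : A r,
                  (∑ θ', empDist s θ' * u r a' θ') - ε ≤
                    ∑ θ', empDist s θ' * u r a θ') := by
  intro astar hastar
  have hM : δ < 4 * nbar * ϱ := by
    have hnϱ : (2 : ℝ) * 2 ≤ nbar * ϱ := by exact_mod_cast Nat.mul_le_mul hn2 hϱ2
    linarith
  have hactions : 4 * (Fintype.card (Σ r, A r) : ℝ) ≤ 4 * nbar * ϱ := by
    rw [mul_assoc, ← hcard]
    exact_mod_cast Nat.mul_le_mul_left 4 (card_sigma_le_card_mul hϱ)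
  subst hk
  exact qptas_core_general hu hε0.le (ceil_log_div_sq_pos hε0 hδ0 hM)
    (mul_exp_ceil_log_div_sq_le hε0 hδ0 hM.le hactions) ⟨hp0, hp1⟩ (fun θ a => (hf θ a).1)
    hα.1.le hg hastar
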